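/- Let G act on a simplicial tree T and let γ be an oriented segment in T. Then the counting function f_γ : G → ℝ, defined by f_γ(g) = c_γ(g) − c_{γ̄}(g) (where c_γ(g) counts maximal non-overlapping positively oriented copies of γ in T_g/⟨g⟩ for hyperbolic g, and is 0 for elliptic g, and γ̄ is γ with reversed orientation), is a quasimorphism on G with defect at most 6. -/

import Mathlib

variable {V : Type*}

/-- A group `G` acts on the simplicial tree `T` by graph automorphisms, without
inversions. -/
def IsTreeAction (T : SimpleGraph V) (G : Type*) [Group G] [MulAction G V] : Prop :=
  T.IsTree ∧ (∀ (g : G) (u v : V), T.Adj u v → T.Adj (g • u) (g • v)) ∧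
    (∀ (g : G) (u v : V), T.Adj u v → ¬(g • u = v ∧ g • v = u))

/-- `w` lies on the geodesic segment from `u` to `v`. -/
def OnSeg (T : SimpleGraph V) (u w v : V) : Prop :=
  T.dist u w + T.dist w v = T.dist u v

/-- `g` is elliptic: it fixes a vertex of `T`. -/
def Elliptic (T : SimpleGraph V) {G : Type*} [Group G] [MulAction G V] (g : G) : Prop :=
  ∃ v : V, g • v = v

/-- The translation length of `g`: the minimal displacement of a vertex. -/
noncomputable def transLen (T : SimpleGraph V) {G : Type*} [Group G] [MulAction G V]
    (g : G) : ℕ :=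
  sInf {n : ℕ | ∃ v : V, T.dist v (g • v) = n}

/-- The characteristic subtree (the axis, for hyperbolic `g`): the set of vertices of
minimal displacement. -/
def Axis (T : SimpleGraph V) {G : Type*} [Group G] [MulAction G V] (g : G) : Set V :=
  {v : V | T.dist v (g • v) = transLen T g}

/-- For `p, q` on the axis of a hyperbolic `g`: `q` lies (weakly) in the positive
`g`-direction from `p`. -/
def Ahead (T : SimpleGraph V) {G : Type*} [Group G] [MulAction G V] (g : G)
    (p q : V) : Prop :=
  T.dist p (g • q) = T.dist p q + transLen T g

/-- There are `n` non-overlapping positively oriented copies of the oriented segment `γ`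
(given by its endpoints) inside the oriented segment from `u` to `w`: copies are
`G`-translates, they lie on `[u,w]` in order, successive copies meeting in at most one
point. -/
def SegCopies (T : SimpleGraph V) (G : Type*) [Group G] [MulAction G V]
    (γ : V × V) (u w : V) (n : ℕ) : Prop :=
  ∃ p q : Fin n → V,
    (∀ i, (∃ s : G, s • γ.1 = p i ∧ s • γ.2 = q i) ∧
      OnSeg T u (p i) (q i) ∧ OnSeg T u (q i) w) ∧
    (∀ i j : Fin n, i < j → OnSeg T u (q i) (p j))

/-- `c_γ(α)`: the maximal number of non-overlapping positively oriented copies of `γ` in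
the segment from `u` to `w`. -/
noncomputable def cSeg (T : SimpleGraph V) (G : Type*) [Group G] [MulAction G V]
    (γ : V × V) (u w : V) : ℕ :=
  sSup {n : ℕ | SegCopies T G γ u w n}

/-- There are `n` non-overlapping positively oriented copies of `γ` in the quotient
circle `T_g/⟨g⟩`: `n` copies lying on the axis of `g`, coherently oriented with the axis,
pairwise non-overlapping in cyclic order, and all fitting within one period of `g`. -/
def CircCopies (T : SimpleGraph V) {G : Type*} [Group G] [MulAction G V]
    (g : G) (γ : V × V) (n : ℕ) : Prop :=
  ∃ p q : Fin n → V,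
    (∀ i, p i ∈ Axis T g ∧ q i ∈ Axis T g ∧
      (∃ s : G, s • γ.1 = p i ∧ s • γ.2 = q i) ∧ Ahead T g (p i) (q i)) ∧
    (∀ i j : Fin n, i < j → Ahead T g (q i) (p j)) ∧
    (∀ i j : Fin n, Ahead T g (q i) (g • p j))

/-- `c_γ(g)`: the maximal number of non-overlapping positively oriented copies of `γ` in
`T_g/⟨g⟩` (for hyperbolic `g`). -/
noncomputable def cCirc (T : SimpleGraph V) {G : Type*} [Group G] [MulAction G V]
    (g : G) (γ : V × V) : ℕ :=
  sSup {n : ℕ | CircCopies T g γ n}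

open scoped Classical in
/-- The counting function `f_γ(g) = c_γ(g) − c_{γ̄}(g)` (zero on elliptic elements),
where `γ̄` is the reverse of `γ`. -/
noncomputable def fCount (T : SimpleGraph V) (G : Type*) [Group G] [MulAction G V]
    (γ : V × V) (g : G) : ℝ :=
  if Elliptic T g then 0
  else (cCirc T g γ : ℝ) - (cCirc T g (γ.2, γ.1) : ℝ)

/-!
If `x` lies on the axis of `g`, then `fCount g` is within `1` of the net number of copies of `γ` in
the segment from `x` to `gx`. Net counts of segments are `G`-invariant, change sign when the segment
is reversed, and are additive up to an error of `1` when a segment is subdivided.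

By the Helly property of subtrees, either the axes `A_h`, `h⁻¹A_g` and `A_{gh}` share a vertex `x`,
or two of `A_g`, `A_h`, `A_{gh}` are disjoint. In the first case `x`, `hx`, `ghx` span a tripod, and
subdividing its three sides costs `3`. In the second case we may assume that `A_g` and `A_h` are
disjoint: since `fCount g⁻¹ = -fCount g`, passing from `(g, h)` to `(gh, h⁻¹)` or to `(g⁻¹, gh)`
preserves the defect up to sign. A period of `A_{gh}` then consists of a period of `A_h`, one of
`A_g`, and two oppositely oriented copies of the bridge between them, whose net counts cancel, so
three subdivisions suffice again. In both cases the three comparisons along axes cost another `3`.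
-/

/-! ### Betweenness in trees -/

section Betweenness

variable {T : SimpleGraph V} {u v w x y : V}

theorem OnSeg.refl_left (T : SimpleGraph V) (u v : V) : OnSeg T u u v := by
  simp [OnSeg]

theorem OnSeg.refl_right (T : SimpleGraph V) (u v : V) : OnSeg T u v v := by
  simp [OnSeg]

theorem OnSeg.symm (h : OnSeg T u w v) : OnSeg T v w u := by
  unfold OnSeg at h ⊢
  rw [SimpleGraph.dist_comm (u := v) (v := w), SimpleGraph.dist_comm (u := w) (v := u),
    SimpleGraph.dist_comm (u := v) (v := u), add_comm, h]

theorem OnSeg.dist_le (h : OnSeg T u w v) : T.dist u w ≤ T.dist u v :=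
  h ▸ Nat.le_add_right _ _

theorem OnSeg.trans_left (hT : T.Connected) (h₁ : OnSeg T u y v) (h₂ : OnSeg T u x y) :
    OnSeg T u x v := by
  have h₃ : T.dist u v ≤ T.dist u x + T.dist x v := hT.dist_triangle
  have h₄ : T.dist x v ≤ T.dist x y + T.dist y v := hT.dist_triangle
  unfold OnSeg at *
  omega

theorem OnSeg.trans_left_right (hT : T.Connected) (h₁ : OnSeg T u y v) (h₂ : OnSeg T u x y) :
    OnSeg T x y v := by
  have h₃ : T.dist u v ≤ T.dist u x + T.dist x v := hT.dist_triangle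
  have h₄ : T.dist x v ≤ T.dist x y + T.dist y v := hT.dist_triangle
  unfold OnSeg at *
  omega

theorem OnSeg.trans_right (hT : T.Connected) (h₁ : OnSeg T u x v) (h₂ : OnSeg T x y v) :
    OnSeg T u y v :=
  (h₁.symm.trans_left hT h₂.symm).symm

theorem OnSeg.trans_right_left (hT : T.Connected) (h₁ : OnSeg T u x v) (h₂ : OnSeg T x y v) :
    OnSeg T u x y :=
  (h₁.symm.trans_left_right hT h₂.symm).symm

theorem OnSeg.antisymm (hT : T.Connected) (h₁ : OnSeg T u x y) (h₂ : OnSeg T u y x) : x = y := by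
  rw [← hT.dist_eq_zero_iff]
  unfold OnSeg at *
  omega

theorem onSeg_iff_mem_support (hT : T.IsTree) {p : T.Walk u v} (hp : p.IsPath) :
    OnSeg T u w v ↔ w ∈ p.support := by
  classical
  have eq_of_length {q : T.Walk u v} (hq : q.length = T.dist u v) : p = q :=
    (hT.existsUnique_path u v).unique hp (q.isPath_of_length_eq_dist hq)
  constructor
  · intro h
    obtain ⟨q, hq⟩ := hT.connected.exists_walk_length_eq_dist u w
    obtain ⟨r, hr⟩ := hT.connected.exists_walk_length_eq_dist w v
    rw [eq_of_length (q := q.append r) (by rw [SimpleGraph.Walk.length_append, hq, hr, h])]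
    exact (q.mem_support_append_iff r).2 (.inl q.end_mem_support)
  · intro hw
    obtain ⟨q, hq⟩ := hT.connected.exists_walk_length_eq_dist u v
    have hlen := congrArg SimpleGraph.Walk.length (p.take_spec hw)
    rw [SimpleGraph.Walk.length_append] at hlen
    rw [← eq_of_length hq] at hq
    have hleft := SimpleGraph.dist_le (p.takeUntil w hw)
    have hright := SimpleGraph.dist_le (p.dropUntil w hw)
    have htri : T.dist u v ≤ T.dist u w + T.dist w v := hT.connected.dist_triangle
    unfold OnSeg
    omega

theorem OnSeg.slim (hT : T.IsTree) (h : OnSeg T u w v) (x : V) : OnSeg T u w x ∨ OnSeg T x w v := by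
  classical
  obtain ⟨p, hp, -⟩ := hT.existsUnique_path u x
  obtain ⟨q, hq, -⟩ := hT.existsUnique_path x v
  rw [onSeg_iff_mem_support hT hp, onSeg_iff_mem_support hT hq,
    ← SimpleGraph.Walk.mem_support_append_iff]
  exact (p.append q).support_bypass_subset_support
    ((onSeg_iff_mem_support hT (p.append q).bypass_isPath).1 h)

theorem OnSeg.append_right (hT : T.IsTree) (h₁ : OnSeg T u x y) (h₂ : OnSeg T x y v) (hxy : x ≠ y) :
    OnSeg T u y v := by
  refine (h₂.slim hT u).resolve_left fun h ↦ ?_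
  exact hxy (h₁.antisymm hT.connected h.symm)

theorem OnSeg.append_left (hT : T.IsTree) (h₁ : OnSeg T u x y) (h₂ : OnSeg T x y v) (hxy : x ≠ y) :
    OnSeg T u x v :=
  (h₁.append_right hT h₂ hxy).trans_left hT.connected h₁

theorem OnSeg.total (hT : T.IsTree) (hx : OnSeg T u x v) (hy : OnSeg T u y v) :
    OnSeg T u x y ∨ OnSeg T u y x :=
  (hx.slim hT y).imp_right fun h ↦ hy.trans_right_left hT.connected h

theorem OnSeg.eq_of_dist_eq (hT : T.IsTree) (hx : OnSeg T u x v) (hy : OnSeg T u y v)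
    (hxy : T.dist u x = T.dist u y) : x = y := by
  rw [← hT.connected.dist_eq_zero_iff]
  have hcomm := T.dist_comm (u := x) (v := y)
  have := hx.total hT hy
  unfold OnSeg at *
  omega

theorem OnSeg.exists_adj (hT : T.Connected) (huv : u ≠ v) : ∃ x, T.Adj u x ∧ OnSeg T u x v := by
  obtain ⟨p, hp⟩ := hT.exists_walk_length_eq_dist u v
  cases p with
  | nil => exact absurd rfl huv
  | @cons _ x _ hux q =>
    refine ⟨x, hux, ?_⟩
    have hq := SimpleGraph.dist_le q
    have htri : T.dist u v ≤ T.dist u x + T.dist x v := hT.dist_triangle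
    rw [SimpleGraph.Walk.length_cons] at hp
    unfold OnSeg
    rw [SimpleGraph.dist_eq_one_iff_adj.2 hux] at htri ⊢
    omega

theorem onSeg_or_onSeg_of_adj (hT : T.IsTree) (u : V) (hvw : T.Adj v w) :
    OnSeg T u v w ∨ OnSeg T u w v := by
  have h := hT.dist_eq_dist_add_one_of_adj u hvw
  have hvw' := SimpleGraph.dist_eq_one_iff_adj.2 hvw
  have hwv' := SimpleGraph.dist_eq_one_iff_adj.2 hvw.symm
  unfold OnSeg
  omega

end Betweenness

/-! ### Convex sets and gates -/

/-- `S` is geodesically convex; in a tree the nonempty convex sets are the subtrees. -/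
def SegConvex (T : SimpleGraph V) (S : Set V) : Prop :=
  ∀ ⦃u⦄, u ∈ S → ∀ ⦃v⦄, v ∈ S → ∀ ⦃w⦄, OnSeg T u w v → w ∈ S

/-- `p` is the gate of `x` in `S`, i.e. the nearest-point projection of `x` to `S`: every
geodesic from a point of `S` to `x` passes through `p`. -/
def IsGate (T : SimpleGraph V) (S : Set V) (x p : V) : Prop :=
  p ∈ S ∧ ∀ a ∈ S, OnSeg T a p x

section Convex

variable {T : SimpleGraph V} {A B C S : Set V} {p x : V}

theorem SegConvex.segment (hT : T.IsTree) (u v : V) : SegConvex T {w | OnSeg T u w v} := by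
  intro x hx y hy z hz
  rcases hz.slim hT u with h | h
  · exact OnSeg.trans_left hT.connected hx h.symm
  · exact OnSeg.trans_left hT.connected hy h

theorem SegConvex.isGate_of_dist_le (hT : T.IsTree) (hS : SegConvex T S) (hp : p ∈ S)
    (hmin : ∀ a ∈ S, T.dist p x ≤ T.dist a x) : IsGate T S x p := by
  refine ⟨hp, fun a ha ↦ ?_⟩
  rcases eq_or_ne p x with rfl | hpx
  · exact OnSeg.refl_right T a p
  obtain ⟨z, hpz, hz⟩ := OnSeg.exists_adj hT.connected hpx
  have hzS : z ∉ S := by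
    intro hzS
    have hle := hmin z hzS
    have hone := SimpleGraph.dist_eq_one_iff_adj.2 hpz
    unfold OnSeg at hz
    omega
  have hapz : OnSeg T a p z :=
    (onSeg_or_onSeg_of_adj hT a hpz).resolve_right fun h ↦ hzS (hS ha hp h)
  exact hapz.append_left hT hz hpz.ne

theorem SegConvex.exists_isGate (hT : T.IsTree) (hS : SegConvex T S) (hne : S.Nonempty) (x : V) :
    ∃ p, IsGate T S x p :=
  ⟨_, hS.isGate_of_dist_le hT (Function.argminOn_mem (T.dist · x) S hne)
    fun _ ha ↦ Function.argminOn_le (T.dist · x) S ha⟩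

theorem exists_median (hT : T.IsTree) (a b c : V) :
    ∃ m, OnSeg T a m b ∧ OnSeg T b m c ∧ OnSeg T a m c := by
  obtain ⟨m, hm, hgate⟩ := (SegConvex.segment hT a b).exists_isGate hT ⟨a, OnSeg.refl_left T a b⟩ c
  exact ⟨m, hm, hgate b (OnSeg.refl_right T a b), hgate a (OnSeg.refl_left T a b)⟩

theorem SegConvex.helly (hT : T.IsTree) (hA : SegConvex T A) (hB : SegConvex T B)
    (hC : SegConvex T C) (hAB : (A ∩ B).Nonempty) (hBC : (B ∩ C).Nonempty)
    (hAC : (A ∩ C).Nonempty) :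
    (A ∩ B ∩ C).Nonempty := by
  obtain ⟨c, hcA, hcB⟩ := hAB
  obtain ⟨a, haB, haC⟩ := hBC
  obtain ⟨b, hbA, hbC⟩ := hAC
  obtain ⟨m, hab, hbc, hac⟩ := exists_median hT a b c
  exact ⟨m, ⟨hA hbA hcA hbc, hB haB hcB hac⟩, hC haC hbC hab⟩

theorem SegConvex.exists_bridge (hT : T.IsTree) (hA : SegConvex T A) (hB : SegConvex T B)
    (hAne : A.Nonempty) (hBne : B.Nonempty) :
    ∃ p q, IsGate T A q p ∧ IsGate T B p q := by
  have hne := hAne.prod hBne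
  let d : V × V → ℕ := fun z ↦ T.dist z.1 z.2
  obtain ⟨⟨p, q⟩, ⟨hp, hq⟩, hmin⟩ : ∃ z ∈ A ×ˢ B, ∀ z' ∈ A ×ˢ B, d z ≤ d z' :=
    ⟨_, Function.argminOn_mem d _ hne, fun _ hz' ↦ Function.argminOn_le d _ hz'⟩
  refine ⟨p, q, hA.isGate_of_dist_le hT hp fun a ha ↦ hmin (a, q) ⟨ha, hq⟩,
    hB.isGate_of_dist_le hT hq fun b hb ↦ ?_⟩
  rw [T.dist_comm (u := q), T.dist_comm (u := b)]
  exact hmin (p, b) ⟨hp, hb⟩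

end Convex

/-! ### Displacement and the axis -/

section Displacement

variable {T : SimpleGraph V} {G : Type*} [Group G] [MulAction G V] {g k : G} {p u v w x y : V}

theorem IsTreeAction.dist_smul (hT : IsTreeAction T G) (g : G) (u v : V) :
    T.dist (g • u) (g • v) = T.dist u v := by
  have dist_smul_le (k : G) (a b : V) : T.dist (k • a) (k • b) ≤ T.dist a b := by
    obtain ⟨p, hp⟩ := hT.1.connected.exists_walk_length_eq_dist a b
    let φ : T →g T := ⟨(k • ·), hT.2.1 k _ _⟩
    rw [← hp, ← p.length_map φ]
    exact SimpleGraph.dist_le (p.map φ)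
  refine (dist_smul_le g u v).antisymm ?_
  simpa only [inv_smul_smul] using dist_smul_le g⁻¹ (g • u) (g • v)

theorem IsTreeAction.dist_inv_smul (hT : IsTreeAction T G) (g : G) (u v : V) :
    T.dist u (g⁻¹ • v) = T.dist (g • u) v := by
  rw [← hT.dist_smul g u, smul_inv_smul]

theorem IsTreeAction.onSeg_smul_iff (hT : IsTreeAction T G) (g : G) :
    OnSeg T (g • u) (g • w) (g • v) ↔ OnSeg T u w v := by
  simp only [OnSeg, hT.dist_smul]

theorem SegConvex.preimage_smul {S : Set V} (hT : IsTreeAction T G) (hS : SegConvex T S) (g : G) :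
    SegConvex T ((g • ·) ⁻¹' S) :=
  fun _ hu _ hv _ hw ↦ hS hu hv ((hT.onSeg_smul_iff g).2 hw)

theorem transLen_le_dist (T : SimpleGraph V) (g : G) (x : V) : transLen T g ≤ T.dist x (g • x) :=
  Nat.sInf_le ⟨x, rfl⟩

theorem mem_axis_of_dist_le (h : T.dist x (g • x) ≤ transLen T g) : x ∈ Axis T g :=
  h.antisymm (transLen_le_dist T g x)

theorem mem_axis_of_smul_eq (h : g • x = x) : x ∈ Axis T g :=
  mem_axis_of_dist_le (by simp [h])

theorem axis_nonempty [Nonempty V] (T : SimpleGraph V) (g : G) : (Axis T g).Nonempty :=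
  Nat.sInf_mem (s := {n | ∃ v, T.dist v (g • v) = n}) (Set.range_nonempty _)

theorem transLen_inv (hT : IsTreeAction T G) (g : G) : transLen T g⁻¹ = transLen T g := by
  simp only [transLen, hT.dist_inv_smul, T.dist_comm (u := g • _)]

theorem axis_inv (hT : IsTreeAction T G) (g : G) : Axis T g⁻¹ = Axis T g := by
  simp only [Axis, transLen_inv hT, hT.dist_inv_smul, T.dist_comm (u := g • _)]

theorem elliptic_inv : Elliptic T g⁻¹ ↔ Elliptic T g :=
  exists_congr fun _ ↦ inv_smul_eq_iff.trans eq_comm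

theorem smul_eq_of_elliptic (hT : IsTreeAction T G) (hg : Elliptic T g) (hx : x ∈ Axis T g) :
    g • x = x := by
  obtain ⟨v, hv⟩ := hg
  have hle := transLen_le_dist T g v
  rw [hv, SimpleGraph.dist_self, ← hx.out, Nat.le_zero, hT.1.connected.dist_eq_zero_iff] at hle
  exact hle.symm

theorem smul_mem_axis_iff (hT : IsTreeAction T G) (hk : Commute g k) :
    k • x ∈ Axis T g ↔ x ∈ Axis T g := by
  simp only [Axis, Set.mem_ofPred_eq, ← mul_smul, hk.eq]
  rw [mul_smul, hT.dist_smul]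

theorem smul_mem_axis (hT : IsTreeAction T G) (hx : x ∈ Axis T g) : g • x ∈ Axis T g :=
  (smul_mem_axis_iff hT (Commute.refl g)).2 hx

theorem inv_smul_mem_axis (hT : IsTreeAction T G) (hx : x ∈ Axis T g) : g⁻¹ • x ∈ Axis T g :=
  (smul_mem_axis_iff hT (Commute.refl g).inv_right).2 hx

theorem segConvex_axis (hT : IsTreeAction T G) (g : G) : SegConvex T (Axis T g) := by
  intro x hx y hy m hm
  have hm' := (hT.onSeg_smul_iff g).2 hm
  refine mem_axis_of_dist_le ?_
  rcases hm'.slim hT.1 m with h | h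
  · have htri : T.dist (g • x) m ≤ T.dist (g • x) x + T.dist x m := hT.1.connected.dist_triangle
    rw [← h, hT.dist_smul, T.dist_comm (u := g • x) (v := x), hx.out,
      T.dist_comm (u := g • m)] at htri
    omega
  · have htri : T.dist m (g • y) ≤ T.dist m y + T.dist y (g • y) := hT.1.connected.dist_triangle
    rw [← h, hT.dist_smul, hy.out] at htri
    omega

theorem IsGate.onSeg_inv_smul (hT : IsTreeAction T G) (hp : IsGate T (Axis T g) x p) :
    OnSeg T (g⁻¹ • p) p x :=
  hp.2 _ (inv_smul_mem_axis hT hp.1)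

theorem IsGate.onSeg_smul_smul (hT : IsTreeAction T G) (hp : IsGate T (Axis T g) x p) :
    OnSeg T p (g • p) (g • x) := by
  have h := (hT.onSeg_smul_iff g).2 (hp.onSeg_inv_smul hT)
  rwa [smul_inv_smul] at h

theorem IsGate.onSeg_smul (hT : IsTreeAction T G) (hp : IsGate T (Axis T g) x p) :
    OnSeg T x p (g • x) := by
  rcases eq_or_ne p (g • p) with hfix | hne
  · obtain ⟨m, hxp, hpx, hm⟩ := exists_median hT.1 x p (g • x)
    have hgm : OnSeg T p (g • m) (g • x) := by
      simpa only [← hfix] using ((hT.onSeg_smul_iff g).2 hxp).symm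
    have hdist : T.dist p m = T.dist p (g • m) := by
      conv_rhs => rw [hfix, hT.dist_smul]
    have hmA : m ∈ Axis T g := mem_axis_of_smul_eq (hpx.eq_of_dist_eq hT.1 hgm hdist).symm
    rwa [(hp.2 m hmA).symm.antisymm hT.1.connected hxp]
  · have hgp := hp.2 _ (smul_mem_axis hT hp.1)
    exact hgp.symm.append_left hT.1 (hp.onSeg_smul_smul hT) hne

theorem IsGate.dist_smul_eq (hT : IsTreeAction T G) (hp : IsGate T (Axis T g) x p) :
    T.dist x (g • x) = 2 * T.dist x p + transLen T g := by
  rw [← hp.onSeg_smul hT, ← hp.onSeg_smul_smul hT, hT.dist_smul, hp.1.out, T.dist_comm (u := p)]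
  ring

theorem mem_axis_of_onSeg_smul_smul (hT : IsTreeAction T G) (h : OnSeg T x (g • x) (g • g • x)) :
    x ∈ Axis T g := by
  have : Nonempty V := hT.1.connected.nonempty
  obtain ⟨p, hp⟩ := (segConvex_axis hT g).exists_isGate hT.1 (axis_nonempty T g) x
  have hdisp := hp.dist_smul_eq hT
  have hleft : T.dist x (g • p) ≤ T.dist x p + T.dist p (g • p) := hT.1.connected.dist_triangle
  have hright : T.dist p (g • x) ≤ T.dist p (g • p) + T.dist (g • p) (g • x) :=
    hT.1.connected.dist_triangle
  have htri : T.dist x (g • g • x) ≤ T.dist x (g • p) + T.dist (g • p) (g • g • x) :=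
    hT.1.connected.dist_triangle
  rw [hT.dist_smul, T.dist_comm (u := p) (v := x)] at hright
  rw [← h, hT.dist_smul, hT.dist_smul] at htri
  rw [hp.1.out] at hleft hright
  exact mem_axis_of_dist_le (by omega)

theorem onSeg_smul_smul (hT : IsTreeAction T G) (hg : ¬Elliptic T g) (hx : x ∈ Axis T g) :
    OnSeg T x (g • x) (g • g • x) := by
  have hne : x ≠ g • x := fun h ↦ hg ⟨x, h.symm⟩
  obtain ⟨y, hxy, hy⟩ := OnSeg.exists_adj hT.1.connected hne
  have hgxy := hT.2.1 g _ _ hxy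
  rcases onSeg_or_onSeg_of_adj hT.1 x hgxy with h | h
  · exact h.append_left hT.1 ((hT.onSeg_smul_iff g).2 hy) hgxy.ne
  exfalso
  have hlen := hx.out
  have hpos := hT.1.connected.pos_dist_of_ne hne
  have hmin := transLen_le_dist T g y
  have hone := SimpleGraph.dist_eq_one_iff_adj.2 hxy
  have hone' := SimpleGraph.dist_eq_one_iff_adj.2 hgxy.symm
  have hcomm := T.dist_comm (u := y) (v := g • y)
  have htotal := hy.total hT.1 h
  unfold OnSeg at hy h htotal
  refine hT.2.2 g x y hxy ⟨?_, ?_⟩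
  · rw [eq_comm, ← hT.1.connected.dist_eq_zero_iff]
    omega
  · rw [eq_comm, ← hT.1.connected.dist_eq_zero_iff]
    omega

end Displacement

/-! ### The linear preorder on the axis of a hyperbolic element -/

section Ahead

variable {T : SimpleGraph V} {G : Type*} [Group G] [MulAction G V] {g k : G} {a b c x y : V}

theorem ahead_iff_onSeg (hb : b ∈ Axis T g) : Ahead T g a b ↔ OnSeg T a b (g • b) := by
  rw [Ahead, OnSeg, hb.out, eq_comm]

theorem ahead_iff_onSeg_smul (hT : IsTreeAction T G) (ha : a ∈ Axis T g) :
    Ahead T g a b ↔ OnSeg T a (g • a) (g • b) := by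
  rw [Ahead, OnSeg, ha.out, hT.dist_smul, eq_comm, add_comm]

theorem Ahead.refl (ha : a ∈ Axis T g) : Ahead T g a a :=
  (ahead_iff_onSeg ha).2 (OnSeg.refl_left T a (g • a))

theorem ahead_smul_iff (hT : IsTreeAction T G) (hk : Commute g k) :
    Ahead T g (k • a) (k • b) ↔ Ahead T g a b := by
  rw [Ahead, ← mul_smul, hk.eq, mul_smul, hT.dist_smul, hT.dist_smul, Ahead]

theorem ahead_inv_iff (hT : IsTreeAction T G) : Ahead T g⁻¹ a b ↔ Ahead T g b a := by
  rw [Ahead, hT.dist_inv_smul, transLen_inv hT, T.dist_comm, T.dist_comm (u := a), Ahead]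

theorem ahead_total (hT : IsTreeAction T G) (hg : ¬Elliptic T g) (hb : b ∈ Axis T g) (a : V) :
    Ahead T g a b ∨ Ahead T g b a := by
  rcases (onSeg_smul_smul hT hg hb).slim hT.1 (g • a) with h | h
  · exact .inr ((ahead_iff_onSeg_smul hT hb).2 h)
  · exact .inl ((ahead_iff_onSeg hb).2 ((hT.onSeg_smul_iff g).1 h))

theorem Ahead.onSeg_smul (hT : IsTreeAction T G) (hg : ¬Elliptic T g) (hb : b ∈ Axis T g)
    (hab : Ahead T g a b) (hbc : Ahead T g b c) : OnSeg T a b (g • c) :=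
  ((ahead_iff_onSeg hb).1 hab).append_left hT.1 ((ahead_iff_onSeg_smul hT hb).1 hbc)
    fun h ↦ hg ⟨b, h.symm⟩

theorem Ahead.trans (hT : IsTreeAction T G) (hg : ¬Elliptic T g) (hb : b ∈ Axis T g)
    (hc : c ∈ Axis T g) (hab : Ahead T g a b) (hbc : Ahead T g b c) : Ahead T g a c :=
  (ahead_iff_onSeg hc).2
    ((hab.onSeg_smul hT hg hb hbc).trans_right hT.1.connected ((ahead_iff_onSeg hc).1 hbc))

theorem Ahead.onSeg (hT : IsTreeAction T G) (hg : ¬Elliptic T g) (hb : b ∈ Axis T g)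
    (hc : c ∈ Axis T g) (hab : Ahead T g a b) (hbc : Ahead T g b c) : OnSeg T a b c :=
  (hab.onSeg_smul hT hg hb hbc).trans_right_left hT.1.connected ((ahead_iff_onSeg hc).1 hbc)

theorem ahead_self_smul (hT : IsTreeAction T G) (hg : ¬Elliptic T g) (ha : a ∈ Axis T g) :
    Ahead T g a (g • a) :=
  (ahead_iff_onSeg_smul hT ha).2 (onSeg_smul_smul hT hg ha)

theorem Ahead.dist_smul_lt (hT : IsTreeAction T G) (hg : ¬Elliptic T g) (ha : a ∈ Axis T g)
    (hc : c ∈ Axis T g) (h : Ahead T g (g • a) c) : T.dist (g • a) c < T.dist a c := by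
  have hseg := (ahead_self_smul hT hg ha).onSeg hT hg (smul_mem_axis hT ha) hc h
  have hpos := hT.1.connected.pos_dist_of_ne (u := a) (v := g • a) fun h ↦ hg ⟨a, h.symm⟩
  rw [← hseg]
  omega

theorem OnSeg.ahead (hT : IsTreeAction T G) (hg : ¬Elliptic T g) (hx : x ∈ Axis T g)
    (hb : b ∈ Axis T g) (hxa : OnSeg T x a b) (hxb : OnSeg T x b (g • x)) : Ahead T g a b := by
  have hgb := (hT.onSeg_smul_iff g).2 hxb
  have hgx := (onSeg_smul_smul hT hg hx).trans_right_left hT.1.connected hgb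
  exact (ahead_iff_onSeg hb).2
    ((hgx.trans_left hT.1.connected hxb).trans_left_right hT.1.connected hxa)

theorem exists_zpow_smul_between (hT : IsTreeAction T G) (hg : ¬Elliptic T g) (hx : x ∈ Axis T g)
    (hy : y ∈ Axis T g) :
    ∃ n : ℤ, Ahead T g x (g ^ n • y) ∧ Ahead T g (g ^ n • y) (g • x) := by
  have hpow (n : ℤ) : g ^ n • y ∈ Axis T g := (smul_mem_axis_iff hT (Commute.self_zpow g n)).2 hy
  let n := Function.argmin fun m : ℤ ↦ T.dist x (g ^ m • y)
  have hmin (m : ℤ) : T.dist x (g ^ n • y) ≤ T.dist x (g ^ m • y) :=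
    Function.argmin_le (fun m : ℤ ↦ T.dist x (g ^ m • y)) m
  rcases ahead_total hT hg (hpow n) x with h | h
  · refine ⟨n, h, ?_⟩
    rcases ahead_total hT hg (hpow n) (g • x) with h' | h'
    · have hlt := h'.dist_smul_lt hT hg hx (hpow n)
      have hle := hmin (-1 + n)
      rw [zpow_add, zpow_neg_one, mul_smul, hT.dist_inv_smul] at hle
      exact absurd hle hlt.not_ge
    · exact h'
  · have hsucc : g ^ (1 + n) • y = g • g ^ n • y := by rw [zpow_one_add, mul_smul]
    refine ⟨1 + n, ?_, ?_⟩
    · rcases ahead_total hT hg hx (g ^ (1 + n) • y) with h' | h'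
      · rw [hsucc] at h'
        have hlt := h'.dist_smul_lt hT hg (hpow n) hx
        rw [← hsucc, T.dist_comm, T.dist_comm (u := g ^ n • y)] at hlt
        exact absurd (hmin (1 + n)) hlt.not_ge
      · exact h'
    · rw [hsucc]
      exact (ahead_smul_iff hT (Commute.refl g)).2 h

end Ahead

/-! ### Copies in a segment -/

section SegCount

variable {T : SimpleGraph V} {G : Type*} [Group G] [MulAction G V] {γ : V × V} {u v w : V}
  {m n : ℕ}

theorem segCopies_zero (T : SimpleGraph V) (G : Type*) [Group G] [MulAction G V] (γ : V × V)
    (u w : V) : SegCopies T G γ u w 0 :=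
  ⟨Fin.elim0, Fin.elim0, fun i ↦ i.elim0, fun i ↦ i.elim0⟩

theorem segCopies_card {ι : Type*} [LinearOrder ι] {p q : ι → V} (s : Finset ι)
    (hcopy : ∀ i, ∃ g : G, g • γ.1 = p i ∧ g • γ.2 = q i)
    (hseg : ∀ i ∈ s, OnSeg T u (p i) (q i) ∧ OnSeg T u (q i) w)
    (hlt : ∀ i ∈ s, ∀ j, i < j → OnSeg T u (q i) (p j)) : SegCopies T G γ u w s.card := by
  let e := s.orderEmbOfFin rfl
  have he (i) : e i ∈ s := s.orderEmbOfFin_mem rfl i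
  exact ⟨p ∘ e, q ∘ e, fun i ↦ ⟨hcopy (e i), hseg (e i) (he i)⟩,
    fun i j hij ↦ hlt (e i) (he i) (e j) (e.strictMono hij)⟩

theorem SegCopies.smul (hT : IsTreeAction T G) (g : G) (h : SegCopies T G γ u w n) :
    SegCopies T G γ (g • u) (g • w) n := by
  obtain ⟨p, q, hcopy, hlt⟩ := h
  refine ⟨fun i ↦ g • p i, fun i ↦ g • q i, fun i ↦ ?_, fun i j hij ↦ ?_⟩
  · obtain ⟨⟨s, hp, hq⟩, hpq, hqw⟩ := hcopy i
    exact ⟨⟨g * s, by rw [mul_smul, hp], by rw [mul_smul, hq]⟩,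
      (hT.onSeg_smul_iff g).2 hpq, (hT.onSeg_smul_iff g).2 hqw⟩
  · exact (hT.onSeg_smul_iff g).2 (hlt i j hij)

theorem SegCopies.swap (hT : T.Connected) (h : SegCopies T G γ u w n) :
    SegCopies T G γ.swap w u n := by
  obtain ⟨p, q, hcopy, hlt⟩ := h
  refine ⟨q ∘ Fin.rev, p ∘ Fin.rev, fun i ↦ ?_, fun i j hij ↦ ?_⟩
  · obtain ⟨⟨s, hp, hq⟩, hpq, hqw⟩ := hcopy i.rev
    exact ⟨⟨s, hq, hp⟩, (hqw.trans_left_right hT hpq).symm, (hqw.trans_left hT hpq).symm⟩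
  · obtain ⟨-, hpq, hqw⟩ := hcopy i.rev
    exact ((hqw.trans_left hT hpq).trans_left_right hT
      (hlt j.rev i.rev (Fin.rev_lt_rev.2 hij))).symm

theorem SegCopies.le_dist (hT : T.Connected) (hγ : γ.1 ≠ γ.2) (h : SegCopies T G γ u w n) :
    n ≤ T.dist u w := by
  obtain ⟨p, q, hcopy, hlt⟩ := h
  have hpq (i) : T.dist u (p i) < T.dist u (q i) := by
    obtain ⟨⟨s, hp, hq⟩, hseg, -⟩ := hcopy i
    have hne : p i ≠ q i := by
      rw [← hp, ← hq]
      exact (MulAction.injective s).ne hγ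
    have hpos := hT.pos_dist_of_ne hne
    unfold OnSeg at hseg
    omega
  have hmono : StrictMono fun i ↦ T.dist u (p i) := fun i j hij ↦
    (hpq i).trans_le (hlt i j hij).dist_le
  have hbound (i) : T.dist u (p i) < T.dist u w :=
    (hpq i).trans_le (hcopy i).2.2.dist_le
  have hinj : Function.Injective fun i ↦ (⟨T.dist u (p i), hbound i⟩ : Fin (T.dist u w)) :=
    fun i j hij ↦ hmono.injective (Fin.mk.inj hij)
  simpa only [Fintype.card_fin] using Fintype.card_le_of_injective _ hinj

theorem SegCopies.le_cSeg (hT : T.Connected) (hγ : γ.1 ≠ γ.2) (h : SegCopies T G γ u w n) :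
    n ≤ cSeg T G γ u w :=
  le_csSup ⟨T.dist u w, fun _ ↦ SegCopies.le_dist hT hγ⟩ h

theorem segCopies_cSeg (hT : T.Connected) (hγ : γ.1 ≠ γ.2) (u w : V) :
    SegCopies T G γ u w (cSeg T G γ u w) :=
  Nat.sSup_mem ⟨0, segCopies_zero T G γ u w⟩ ⟨T.dist u w, fun _ ↦ SegCopies.le_dist hT hγ⟩

theorem cSeg_smul (hT : IsTreeAction T G) (γ : V × V) (g : G) (u w : V) :
    cSeg T G γ (g • u) (g • w) = cSeg T G γ u w := by
  refine congrArg sSup (Set.ext fun n ↦ ⟨fun h ↦ ?_, SegCopies.smul hT g⟩)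
  have h' := SegCopies.smul hT g⁻¹ h
  rwa [inv_smul_smul, inv_smul_smul] at h'

theorem cSeg_swap (hT : T.Connected) (G : Type*) [Group G] [MulAction G V] (γ : V × V) (u w : V) :
    cSeg T G γ.swap w u = cSeg T G γ u w :=
  congrArg sSup (Set.ext fun _ ↦ ⟨SegCopies.swap hT, SegCopies.swap hT⟩)

theorem SegCopies.append (hT : T.Connected) (h : OnSeg T u v w) (h₁ : SegCopies T G γ u v m)
    (h₂ : SegCopies T G γ v w n) : SegCopies T G γ u w (m + n) := by
  obtain ⟨p, q, hcopy, hlt⟩ := h₁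
  obtain ⟨p', q', hcopy', hlt'⟩ := h₂
  have hvq' (j) : OnSeg T u v (q' j) := h.trans_right_left hT (hcopy' j).2.2
  have hvp' (j) : OnSeg T u v (p' j) := (hvq' j).trans_right_left hT (hcopy' j).2.1
  refine ⟨Fin.append p p', Fin.append q q', fun i ↦ ?_, fun i j hij ↦ ?_⟩
  · induction i using Fin.addCases with
    | left i =>
      obtain ⟨hs, hpq, hqv⟩ := hcopy i
      simpa only [Fin.append_left] using ⟨hs, hpq, h.trans_left hT hqv⟩
    | right i =>
      obtain ⟨hs, hpq, hqw⟩ := hcopy' i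
      simpa only [Fin.append_right] using
        ⟨hs, (hvq' i).trans_right hT hpq, h.trans_right hT hqw⟩
  · induction i using Fin.addCases with
    | left i =>
      induction j using Fin.addCases with
      | left j =>
        simpa only [Fin.append_left] using hlt i j ((Fin.strictMono_castAdd _).lt_iff_lt.1 hij)
      | right j =>
        simpa only [Fin.append_left, Fin.append_right] using
          (hvp' j).trans_left hT (hcopy i).2.2
    | right i =>
      induction j using Fin.addCases with
      | left j =>
        rw [Fin.lt_def, Fin.val_natAdd, Fin.val_castAdd] at hij
        omega
      | right j =>
        simpa only [Fin.append_right] using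
          (hvp' j).trans_right hT (hlt' i j ((Fin.natAdd_lt_natAdd_iff _).1 hij))

theorem cSeg_add_le (hT : T.Connected) (hγ : γ.1 ≠ γ.2) (h : OnSeg T u v w) :
    cSeg T G γ u v + cSeg T G γ v w ≤ cSeg T G γ u w :=
  ((segCopies_cSeg hT hγ u v).append hT h (segCopies_cSeg hT hγ v w)).le_cSeg hT hγ

theorem cSeg_le_add_add_one (hT : T.IsTree) (hγ : γ.1 ≠ γ.2) (h : OnSeg T u v w) :
    cSeg T G γ u w ≤ cSeg T G γ u v + cSeg T G γ v w + 1 := by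
  classical
  have hconn := hT.connected
  obtain ⟨p, q, hcopy, hlt⟩ := segCopies_cSeg (G := G) hconn hγ u w
  let L := Finset.univ.filter fun i ↦ OnSeg T u (q i) v
  let R := Finset.univ.filter fun i ↦ OnSeg T u v (p i)
  have hL : SegCopies T G γ u v L.card :=
    segCopies_card L (fun i ↦ (hcopy i).1)
      (fun i hi ↦ ⟨(hcopy i).2.1, (Finset.mem_filter_univ i).1 hi⟩) fun i _ j hij ↦ hlt i j hij
  have hR : SegCopies T G γ v w R.card := by
    have hvq (i) (hi : i ∈ R) : OnSeg T u v (q i) :=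
      (hcopy i).2.1.trans_left hconn ((Finset.mem_filter_univ i).1 hi)
    refine segCopies_card R (fun i ↦ (hcopy i).1) (fun i hi ↦ ?_) fun i hi j hij ↦ ?_
    · obtain ⟨-, hpq, hqw⟩ := hcopy i
      exact ⟨hpq.trans_left_right hconn ((Finset.mem_filter_univ i).1 hi),
        hqw.trans_left_right hconn (hvq i hi)⟩
    · exact (hlt i j hij).trans_left_right hconn (hvq i hi)
  have hstraddle : (L ∪ R)ᶜ.card ≤ 1 := by
    have key {i j} (hi : i ∉ L) (hij : i < j) : j ∈ R := by
      rw [Finset.mem_filter_univ] at hi ⊢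
      exact (hlt i j hij).trans_left hconn (((hcopy i).2.2.total hT h).resolve_left hi)
    rw [Finset.card_le_one]
    intro i hi j hj
    rw [Finset.mem_compl, Finset.mem_union, not_or] at hi hj
    rcases lt_trichotomy i j with hij | hij | hij
    · exact absurd (key hi.1 hij) hj.2
    · exact hij
    · exact absurd (key hj.1 hij) hi.2
  have hcard := (L ∪ R).card_add_card_compl
  rw [Fintype.card_fin] at hcard
  have hunion := Finset.card_union_le L R
  have hLle := hL.le_cSeg hconn hγ
  have hRle := hR.le_cSeg hconn hγ
  omega

end SegCount

/-! ### Copies in the quotient circle -/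

section CircCount

variable {T : SimpleGraph V} {G : Type*} [Group G] [MulAction G V] {γ : V × V} {g : G} {x y z : V}
  {n : ℕ}

theorem cSeg_period_le (hT : IsTreeAction T G) (hγ : γ.1 ≠ γ.2) (hg : ¬Elliptic T g)
    (hx : x ∈ Axis T g) (hy : y ∈ Axis T g) :
    cSeg T G γ y (g • y) ≤ cSeg T G γ x (g • x) + 1 := by
  have hconn := hT.1.connected
  obtain ⟨k, hxz, hzx⟩ := exists_zpow_smul_between hT hg hx hy
  have hz : g ^ k • y ∈ Axis T g := (smul_mem_axis_iff hT (Commute.self_zpow g k)).2 hy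
  have hperiod : cSeg T G γ (g ^ k • y) (g • g ^ k • y) = cSeg T G γ y (g • y) := by
    rw [← mul_smul, (Commute.self_zpow g k).eq, mul_smul, cSeg_smul hT]
  generalize g ^ k • y = z at *
  have hxz' : OnSeg T x z (g • x) := hxz.onSeg hT hg hz (smul_mem_axis hT hx) hzx
  have hzx' : OnSeg T z (g • x) (g • z) :=
    hzx.onSeg hT hg (smul_mem_axis hT hx) (smul_mem_axis hT hz)
      ((ahead_smul_iff hT (Commute.refl g)).2 hxz)
  calc cSeg T G γ y (g • y) = cSeg T G γ z (g • z) := hperiod.symm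
    _ ≤ cSeg T G γ z (g • x) + cSeg T G γ (g • x) (g • z) + 1 :=
      cSeg_le_add_add_one hT.1 hγ hzx'
    _ = cSeg T G γ x z + cSeg T G γ z (g • x) + 1 := by rw [cSeg_smul hT, add_comm (cSeg ..)]
    _ ≤ cSeg T G γ x (g • x) + 1 := by gcongr; exact cSeg_add_le hconn hγ hxz'

theorem SegCopies.circCopies (hT : IsTreeAction T G) (hg : ¬Elliptic T g) (hx : x ∈ Axis T g)
    (h : SegCopies T G γ x (g • x) n) : CircCopies T g γ n := by
  have hconn := hT.1.connected
  have hgx : g • x ∈ Axis T g := smul_mem_axis hT hx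
  obtain ⟨p, q, hcopy, hlt⟩ := h
  have hp (i) : OnSeg T x (p i) (g • x) := (hcopy i).2.2.trans_left hconn (hcopy i).2.1
  have hpA (i) : p i ∈ Axis T g := segConvex_axis hT g hx hgx (hp i)
  have hqA (i) : q i ∈ Axis T g := segConvex_axis hT g hx hgx (hcopy i).2.2
  refine ⟨p, q, fun i ↦ ⟨hpA i, hqA i, (hcopy i).1, ?_⟩, fun i j hij ↦ ?_, fun i j ↦ ?_⟩
  · exact (hcopy i).2.1.ahead hT hg hx (hqA i) (hcopy i).2.2
  · exact (hlt i j hij).ahead hT hg hx (hpA j) (hp j)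
  · have hqx : Ahead T g (q i) (g • x) :=
      (hcopy i).2.2.ahead hT hg hx hgx (OnSeg.refl_right T x (g • x))
    have hxp : Ahead T g x (p j) := (OnSeg.refl_left T x (p j)).ahead hT hg hx (hpA j) (hp j)
    exact hqx.trans hT hg hgx (smul_mem_axis hT (hpA j))
      ((ahead_smul_iff hT (Commute.refl g)).2 hxp)

theorem CircCopies.exists_segCopies (hT : IsTreeAction T G) (hg : ¬Elliptic T g)
    (h : CircCopies T g γ n) : ∃ y ∈ Axis T g, SegCopies T G γ y (g • y) n := by
  cases n with
  | zero =>
    have : Nonempty V := hT.1.connected.nonempty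
    obtain ⟨y, hy⟩ := axis_nonempty T g
    exact ⟨y, hy, segCopies_zero T G γ y (g • y)⟩
  | succ n =>
    obtain ⟨p, q, hcopy, hlt, hwrap⟩ := h
    have hpA (i) : p i ∈ Axis T g := (hcopy i).1
    have hqA (i) : q i ∈ Axis T g := (hcopy i).2.1
    have hpq (i) : Ahead T g (p i) (q i) := (hcopy i).2.2.2
    have hgp : g • p 0 ∈ Axis T g := smul_mem_axis hT (hpA 0)
    have hp (i) : Ahead T g (p 0) (p i) := by
      rcases (Fin.zero_le i).eq_or_lt with rfl | hi
      · exact Ahead.refl (hpA 0)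
      · exact (hpq 0).trans hT hg (hqA 0) (hpA i) (hlt 0 i hi)
    have hq (i) : Ahead T g (p 0) (q i) := (hp i).trans hT hg (hpA i) (hqA i) (hpq i)
    exact ⟨p 0, hpA 0, p, q, fun i ↦ ⟨(hcopy i).2.2.1,
        (hp i).onSeg hT hg (hpA i) (hqA i) (hpq i), (hq i).onSeg hT hg (hqA i) hgp (hwrap i 0)⟩,
      fun i j hij ↦ (hq i).onSeg hT hg (hqA i) (hpA j) (hlt i j hij)⟩

theorem CircCopies.le_cSeg_add_one (hT : IsTreeAction T G) (hγ : γ.1 ≠ γ.2) (hg : ¬Elliptic T g)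
    (hx : x ∈ Axis T g) (h : CircCopies T g γ n) : n ≤ cSeg T G γ x (g • x) + 1 := by
  obtain ⟨y, hy, hcopies⟩ := h.exists_segCopies hT hg
  exact (hcopies.le_cSeg hT.1.connected hγ).trans (cSeg_period_le hT hγ hg hx hy)

theorem cSeg_le_cCirc (hT : IsTreeAction T G) (hγ : γ.1 ≠ γ.2) (hg : ¬Elliptic T g)
    (hx : x ∈ Axis T g) : cSeg T G γ x (g • x) ≤ cCirc T g γ :=
  le_csSup ⟨cSeg T G γ x (g • x) + 1, fun _ ↦ CircCopies.le_cSeg_add_one hT hγ hg hx⟩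
    ((segCopies_cSeg hT.1.connected hγ x (g • x)).circCopies hT hg hx)

theorem cCirc_le_cSeg_add_one (hT : IsTreeAction T G) (hγ : γ.1 ≠ γ.2) (hg : ¬Elliptic T g)
    (hx : x ∈ Axis T g) : cCirc T g γ ≤ cSeg T G γ x (g • x) + 1 :=
  csSup_le ⟨0, (segCopies_zero T G γ x (g • x)).circCopies hT hg hx⟩
    fun _ ↦ CircCopies.le_cSeg_add_one hT hγ hg hx

theorem CircCopies.inv (hT : IsTreeAction T G) (h : CircCopies T g γ n) :
    CircCopies T g⁻¹ γ.swap n := by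
  obtain ⟨p, q, hcopy, hlt, hwrap⟩ := h
  refine ⟨q ∘ Fin.rev, p ∘ Fin.rev, fun i ↦ ?_, fun i j hij ↦ ?_, fun i j ↦ ?_⟩
  · obtain ⟨hpA, hqA, ⟨s, hp, hq⟩, hpq⟩ := hcopy i.rev
    rw [axis_inv hT]
    exact ⟨hqA, hpA, ⟨s, hq, hp⟩, (ahead_inv_iff hT).2 hpq⟩
  · exact (ahead_inv_iff hT).2 (hlt j.rev i.rev (Fin.rev_lt_rev.2 hij))
  · rw [ahead_inv_iff hT, ← ahead_smul_iff hT (Commute.refl g), smul_inv_smul]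
    exact hwrap j.rev i.rev

theorem cCirc_inv (hT : IsTreeAction T G) (γ : V × V) (g : G) :
    cCirc T g⁻¹ γ = cCirc T g γ.swap := by
  refine congrArg sSup (Set.ext fun n ↦ ⟨fun h ↦ ?_, CircCopies.inv hT⟩)
  have h' := CircCopies.inv hT h
  rwa [inv_inv] at h'

theorem fCount_of_not_elliptic (γ : V × V) (hg : ¬Elliptic T g) :
    fCount T G γ g = cCirc T g γ - cCirc T g γ.swap :=
  if_neg hg

theorem fCount_inv (hT : IsTreeAction T G) (γ : V × V) (g : G) :
    fCount T G γ g⁻¹ = -fCount T G γ g := by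
  unfold fCount
  rw [elliptic_inv, cCirc_inv hT, cCirc_inv hT]
  split_ifs
  · exact neg_zero.symm
  · exact (neg_sub _ _).symm

end CircCount

/-! ### Net counts -/

/-- The net number of copies of `γ` in the oriented segment from `u` to `w`: the analogue of
`fCount` for segments. -/
noncomputable def netCount (T : SimpleGraph V) (G : Type*) [Group G] [MulAction G V] (γ : V × V)
    (u w : V) : ℝ :=
  cSeg T G γ u w - cSeg T G γ.swap u w

section NetCount

variable {T : SimpleGraph V} {G : Type*} [Group G] [MulAction G V] {γ : V × V} {g h : G}
  {u v w x y z : V}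

theorem netCount_comm (hT : T.Connected) (G : Type*) [Group G] [MulAction G V] (γ : V × V)
    (u w : V) : netCount T G γ w u = -netCount T G γ u w := by
  rw [netCount, netCount, cSeg_swap hT, ← cSeg_swap hT G γ, neg_sub]

theorem netCount_self (hT : T.Connected) (G : Type*) [Group G] [MulAction G V] (γ : V × V) (u : V) :
    netCount T G γ u u = 0 :=
  self_eq_neg.1 (netCount_comm hT G γ u u)

theorem netCount_smul (hT : IsTreeAction T G) (γ : V × V) (g : G) (u w : V) :
    netCount T G γ (g • u) (g • w) = netCount T G γ u w := by
  rw [netCount, netCount, cSeg_smul hT, cSeg_smul hT]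

theorem abs_netCount_split_le (hT : T.IsTree) (hγ : γ.1 ≠ γ.2) (h : OnSeg T u v w) :
    |netCount T G γ u w - netCount T G γ u v - netCount T G γ v w| ≤ 1 := by
  have hlow : (cSeg T G γ u v + cSeg T G γ v w : ℝ) ≤ cSeg T G γ u w := by
    exact_mod_cast cSeg_add_le hT.connected hγ h
  have hup : (cSeg T G γ u w : ℝ) ≤ cSeg T G γ u v + cSeg T G γ v w + 1 := by
    exact_mod_cast cSeg_le_add_add_one hT hγ h
  have hlow' : (cSeg T G γ.swap u v + cSeg T G γ.swap v w : ℝ) ≤ cSeg T G γ.swap u w := by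
    exact_mod_cast cSeg_add_le hT.connected hγ.symm h
  have hup' : (cSeg T G γ.swap u w : ℝ) ≤ cSeg T G γ.swap u v + cSeg T G γ.swap v w + 1 := by
    exact_mod_cast cSeg_le_add_add_one hT hγ.symm h
  unfold netCount
  rw [abs_le]
  constructor <;> linarith

theorem abs_netCount_triangle_le (hT : T.IsTree) (hγ : γ.1 ≠ γ.2) (x y z : V) :
    |netCount T G γ x y + netCount T G γ y z + netCount T G γ z x| ≤ 3 := by
  obtain ⟨m, hxy, hyz, hxz⟩ := exists_median hT x y z
  have hsplit_xy := abs_le.1 (abs_netCount_split_le (G := G) hT hγ hxy)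
  have hsplit_yz := abs_le.1 (abs_netCount_split_le (G := G) hT hγ hyz)
  have hsplit_zx := abs_le.1 (abs_netCount_split_le (G := G) hT hγ hxz.symm)
  rw [netCount_comm hT.connected G γ y m] at hsplit_xy
  rw [netCount_comm hT.connected G γ z m] at hsplit_yz
  rw [netCount_comm hT.connected G γ x m] at hsplit_zx
  rw [abs_le]
  constructor <;> linarith

theorem abs_fCount_sub_netCount_le (hT : IsTreeAction T G) (hγ : γ.1 ≠ γ.2) (hz : z ∈ Axis T g) :
    |fCount T G γ g - netCount T G γ z (g • z)| ≤ 1 := by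
  by_cases hg : Elliptic T g
  · rw [fCount, if_pos hg, smul_eq_of_elliptic hT hg hz, netCount_self hT.1.connected]
    norm_num
  · have hlow : (cSeg T G γ z (g • z) : ℝ) ≤ cCirc T g γ := by
      exact_mod_cast cSeg_le_cCirc hT hγ hg hz
    have hup : (cCirc T g γ : ℝ) ≤ cSeg T G γ z (g • z) + 1 := by
      exact_mod_cast cCirc_le_cSeg_add_one hT hγ hg hz
    have hlow' : (cSeg T G γ.swap z (g • z) : ℝ) ≤ cCirc T g γ.swap := by
      exact_mod_cast cSeg_le_cCirc hT hγ.symm hg hz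
    have hup' : (cCirc T g γ.swap : ℝ) ≤ cSeg T G γ.swap z (g • z) + 1 := by
      exact_mod_cast cCirc_le_cSeg_add_one hT hγ.symm hg hz
    rw [fCount_of_not_elliptic γ hg, netCount, abs_le]
    constructor <;> linarith

end NetCount

/-! ### The defect -/

section Defect

variable {T : SimpleGraph V} {G : Type*} [Group G] [MulAction G V] {γ : V × V} {g h : G} {p q x : V}

theorem abs_fCount_mul_sub_le_of_mem (hT : IsTreeAction T G) (hγ : γ.1 ≠ γ.2) (hh : x ∈ Axis T h)
    (hg : h • x ∈ Axis T g) (hgh : x ∈ Axis T (g * h)) :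
    |fCount T G γ (g * h) - fCount T G γ g - fCount T G γ h| ≤ 6 := by
  have happrox_h := abs_le.1 (abs_fCount_sub_netCount_le hT hγ hh)
  have happrox_g := abs_le.1 (abs_fCount_sub_netCount_le hT hγ hg)
  have happrox_gh := abs_le.1 (abs_fCount_sub_netCount_le hT hγ hgh)
  have htri := abs_le.1 (abs_netCount_triangle_le (G := G) hT.1 hγ x (h • x) (g • h • x))
  rw [mul_smul] at happrox_gh
  rw [netCount_comm hT.1.connected G γ x] at htri
  rw [abs_le]
  constructor <;> linarith

theorem exists_mem_axis_of_not_disjoint (hT : IsTreeAction T G)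
    (hg_h : ¬Disjoint (Axis T g) (Axis T h)) (hgh_h : ¬Disjoint (Axis T (g * h)) (Axis T h))
    (hg_gh : ¬Disjoint (Axis T g) (Axis T (g * h))) :
    ∃ x, x ∈ Axis T h ∧ h • x ∈ Axis T g ∧ x ∈ Axis T (g * h) := by
  obtain ⟨y, hyg, hyh⟩ := Set.not_disjoint_iff.1 hg_h
  obtain ⟨w, hwgh, hwh⟩ := Set.not_disjoint_iff.1 hgh_h
  obtain ⟨z, hzg, hzgh⟩ := Set.not_disjoint_iff.1 hg_gh
  have hy : h • h⁻¹ • y ∈ Axis T g := by rwa [smul_inv_smul]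
  have hz : h • (g * h)⁻¹ • z ∈ Axis T g := by
    rw [mul_inv_rev, mul_smul, smul_inv_smul]
    exact inv_smul_mem_axis hT hzg
  obtain ⟨x, ⟨hxh, hxg⟩, hxgh⟩ := (segConvex_axis hT h).helly hT.1
    ((segConvex_axis hT g).preimage_smul hT h) (segConvex_axis hT (g * h))
    ⟨h⁻¹ • y, inv_smul_mem_axis hT hyh, hy⟩ ⟨(g * h)⁻¹ • z, hz, inv_smul_mem_axis hT hzgh⟩
    ⟨w, hwh, hwgh⟩
  exact ⟨x, hxh, hxg, hxgh⟩

theorem IsGate.inv_smul_mem_axis_mul (hT : IsTreeAction T G) (hp : IsGate T (Axis T h) q p)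
    (hq : IsGate T (Axis T g) p q) (hpq : p ≠ q) : h⁻¹ • p ∈ Axis T (g * h) := by
  have hconn := hT.1.connected
  have hto_gp : OnSeg T (h⁻¹ • p) (g • q) (g • p) :=
    ((hp.onSeg_inv_smul hT).append_right hT.1 (hq.onSeg_smul hT) hpq).trans_right hconn
      (hq.onSeg_smul_smul hT)
  have hto_hq : OnSeg T q (h • p) (h • q) :=
    (hp.onSeg_smul hT).trans_right hconn (hp.onSeg_smul_smul hT)
  have hto_hgp : OnSeg T q p (h • g • p) :=
    (hto_hq.append_right hT.1 ((hT.onSeg_smul_iff h).2 (hq.onSeg_smul hT))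
      ((MulAction.injective h).ne hpq)).trans_left hconn (hp.onSeg_smul hT)
  apply mem_axis_of_onSeg_smul_smul hT
  rw [mul_smul, smul_inv_smul, mul_smul]
  exact hto_gp.append_right hT.1 ((hT.onSeg_smul_iff g).2 hto_hgp)
    ((MulAction.injective g).ne hpq.symm)

theorem abs_fCount_mul_sub_le_of_disjoint (hT : IsTreeAction T G) (hγ : γ.1 ≠ γ.2)
    (hdisj : Disjoint (Axis T g) (Axis T h)) :
    |fCount T G γ (g * h) - fCount T G γ g - fCount T G γ h| ≤ 6 := by
  have : Nonempty V := hT.1.connected.nonempty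
  obtain ⟨p, q, hp, hq⟩ := (segConvex_axis hT h).exists_bridge hT.1 (segConvex_axis hT g)
    (axis_nonempty T h) (axis_nonempty T g)
  have hpq : p ≠ q := fun e ↦ hdisj.ne_of_mem hq.1 hp.1 e.symm
  have happrox_h := abs_le.1 (abs_fCount_sub_netCount_le hT hγ (inv_smul_mem_axis hT hp.1))
  have happrox_g := abs_le.1 (abs_fCount_sub_netCount_le hT hγ hq.1)
  have happrox_gh := abs_le.1
    (abs_fCount_sub_netCount_le hT hγ (hp.inv_smul_mem_axis_mul hT hq hpq))
  -- The geodesic from `h⁻¹p` to `ghh⁻¹p = gp` runs through `p`, `q` and `gq`; its pieces `[p, q]`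
  -- and `[gq, gp]` are inverse to each other up to translation, so their net counts cancel.
  have hsplit_p := abs_le.1 (abs_netCount_split_le (G := G) hT.1 hγ
    ((hp.onSeg_inv_smul hT).append_left hT.1 (hq.onSeg_smul hT) hpq))
  have hsplit_q := abs_le.1 (abs_netCount_split_le (G := G) hT.1 hγ (hq.onSeg_smul hT))
  have hsplit_gq := abs_le.1 (abs_netCount_split_le (G := G) hT.1 hγ (hq.onSeg_smul_smul hT))
  have hcancel : netCount T G γ (g • q) (g • p) = -netCount T G γ p q := by
    rw [netCount_smul hT, netCount_comm hT.1.connected]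
  rw [smul_inv_smul] at happrox_h
  rw [mul_smul, smul_inv_smul] at happrox_gh
  rw [abs_le]
  constructor <;> linarith

end Defect

/-- The counting function `f_γ` associated to an oriented segment `γ` in a `G`-tree is a
quasimorphism with defect at most `6`. -/
theorem fCount_quasimorphism {V : Type*} (T : SimpleGraph V) {G : Type*} [Group G]
    [MulAction G V] (hT : IsTreeAction T G) (γ : V × V) (hγ : γ.1 ≠ γ.2) :
    ∀ g h : G, |fCount T G γ (g * h) - fCount T G γ g - fCount T G γ h| ≤ 6 := by
  intro g h
  by_cases hg_h : Disjoint (Axis T g) (Axis T h)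
  · exact abs_fCount_mul_sub_le_of_disjoint hT hγ hg_h
  by_cases hgh_h : Disjoint (Axis T (g * h)) (Axis T h)
  · have hdefect := abs_fCount_mul_sub_le_of_disjoint hT hγ (axis_inv hT h ▸ hgh_h)
    rw [mul_inv_cancel_right, fCount_inv hT, abs_sub_comm] at hdefect
    convert hdefect using 2
    ring
  by_cases hg_gh : Disjoint (Axis T g) (Axis T (g * h))
  · have hdefect := abs_fCount_mul_sub_le_of_disjoint hT hγ (axis_inv hT g ▸ hg_gh)
    rw [inv_mul_cancel_left, fCount_inv hT, abs_sub_comm] at hdefect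
    convert hdefect using 2
    ring
  obtain ⟨x, hxh, hxg, hxgh⟩ := exists_mem_axis_of_not_disjoint hT hg_h hgh_h hg_gh
  exact abs_fCount_mul_sub_le_of_mem hT hγ hxh hxg hxgh
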